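/- If λ = χ⁺ = 2^χ, D is a λ-complete filter on λ extending the club filter, S is D-positive, and cf(δ) ≠ cf(χ) for every δ ∈ S, then ◊_{D+S} holds: there is ⟨f_α : α ∈ S'⟩ for some D+S-positive S' with f_α : α → λ such that for every g : λ → λ the set {α : g↾α = f_α} is D+S-positive. -/

import Mathlib

open Ordinal Set Cardinal

/-- `C` is a closed unbounded subset of the ordinal `o`. -/
def IsClubIn (o : Ordinal.{0}) (C : Set Ordinal) : Prop :=
  C ⊆ Set.Iio o ∧ (∀ a < o, ∃ b ∈ C, a ≤ b) ∧
  ∀ a < o, (C ∩ Set.Iio a).Nonempty → sSup (C ∩ Set.Iio a) = a → a ∈ C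

/-- `S` is a stationary subset of the ordinal `o`. -/
def IsStatIn (o : Ordinal.{0}) (S : Set Ordinal) : Prop :=
  S ⊆ Set.Iio o ∧ ∀ C, IsClubIn o C → (S ∩ C).Nonempty

/-- The functional version of the diamond principle on `S ⊆ o`. -/
def DiamondFun (o : Ordinal.{0}) (S : Set Ordinal) : Prop :=
  ∃ g : Ordinal → Ordinal → Ordinal,
    (∀ δ ∈ S, ∀ α < δ, g δ α < δ) ∧
    ∀ f : Ordinal → Ordinal, (∀ α < o, f α < o) →
      IsStatIn o {δ | δ ∈ S ∧ ∀ α < δ, f α = g δ α}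

/-- The set version of the diamond principle on `S ⊆ o`. -/
def DiamondSet (o : Ordinal.{0}) (S : Set Ordinal) : Prop :=
  ∃ A : Ordinal → Set Ordinal,
    (∀ δ ∈ S, A δ ⊆ Set.Iio δ) ∧
    ∀ X, X ⊆ Set.Iio o → IsStatIn o {δ | δ ∈ S ∧ X ∩ Set.Iio δ = A δ}

/-- The diamond-star principle on `S ⊆ o`. -/
def DiamondStar (o : Ordinal.{0}) (S : Set Ordinal) : Prop :=
  ∃ 𝒜 : Ordinal → Set (Set Ordinal),
    (∀ α ∈ S, (∀ X ∈ 𝒜 α, X ⊆ Set.Iio α) ∧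
        Cardinal.mk ↥(𝒜 α) ≤ Cardinal.lift.{1} α.card) ∧
    ∀ X, X ⊆ Set.Iio o → ∃ C, IsClubIn o C ∧ ∀ α ∈ C ∩ S, X ∩ Set.Iio α ∈ 𝒜 α

/-- `D` is a (proper) filter on the set of ordinals below `o`. -/
def IsFilterOn (o : Ordinal.{0}) (D : Set (Set Ordinal.{0})) : Prop :=
  (∀ A ∈ D, A ⊆ Set.Iio o) ∧ Set.Iio o ∈ D ∧ ∅ ∉ D ∧
  (∀ A ∈ D, ∀ B, B ⊆ Set.Iio o → A ⊆ B → B ∈ D) ∧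
  (∀ A ∈ D, ∀ B ∈ D, A ∩ B ∈ D)

/-- `D` extends the club filter on `o`. -/
def ExtendsClubs (o : Ordinal.{0}) (D : Set (Set Ordinal.{0})) : Prop :=
  ∀ C, IsClubIn o C → C ∈ D

/-- `D` is `μ`-complete: closed under intersections of fewer than `μ` members. -/
def CompleteFor (μ : Cardinal.{0}) (o : Ordinal.{0}) (D : Set (Set Ordinal.{0})) : Prop :=
  ∀ β : Ordinal, β.card < μ → ∀ s : Ordinal → Set Ordinal,
    (∀ i < β, s i ∈ D) → (Set.Iio o ∩ ⋂ i ∈ Set.Iio β, s i) ∈ D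

/-- `S` is `D`-positive. -/
def DPos (o : Ordinal.{0}) (D : Set (Set Ordinal.{0})) (S : Set Ordinal) : Prop :=
  S ⊆ Set.Iio o ∧ (Set.Iio o \ S) ∉ D

/-- The filter `D + S`. -/
def DPlus (o : Ordinal.{0}) (D : Set (Set Ordinal.{0})) (S : Set Ordinal) : Set (Set Ordinal) :=
  {B | B ⊆ Set.Iio o ∧ B ∪ (Set.Iio o \ S) ∈ D}

/-- The diamond principle for a filter `D` on `o`. -/
def DiamondFilter (o : Ordinal.{0}) (D : Set (Set Ordinal.{0})) : Prop :=
  ∃ S : Set Ordinal, DPos o D S ∧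
    ∃ f : Ordinal → Ordinal → Ordinal,
      (∀ α ∈ S, ∀ β < α, f α β < o) ∧
      ∀ g : Ordinal → Ordinal, (∀ α < o, g α < o) →
        DPos o D {α | α ∈ S ∧ ∀ β < α, g β = f α β}

/-- `λ = o` has strong non-reflection for `S` in `κ`. -/
def SNR (o : Ordinal.{0}) (S : Set Ordinal) (κ : Cardinal.{0}) : Prop :=
  ∃ h : Ordinal → Ordinal, (∀ α < o, h α < κ.ord) ∧
    ∃ E, IsClubIn o E ∧ ∀ δ ∈ S ∩ E, ∃ C, IsClubIn δ C ∧ StrictMonoOn h C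

/-!
Suppose every sequence of guesses fails. There are only `λ = 2^χ` codes for partial arrays of
functions, so fix a list of the codes, and for each `δ < λ` an injective ranking of the codes below
`δ` by elements of `χ`. For each row `i < χ` build, by recursion on `ζ < χ`, a sequence of guesses
and a counterexample `Y i ζ` to it: the guess at `δ` follows entry `ζ` of row `i` of some code below
`δ` of rank `< i` that agrees with all `Y i η`, `η < ζ`. By completeness some `δ` is closed under
coding initial segments of the array `Y`, has `cf δ ≠ cf χ`, and is a point at which all the guesses
fail. By the cofinality hypothesis a single `i < χ` bounds the ranks of cofinally many true codes,
so row `i` never lacks a code to follow. Each failure then refutes a code of rank `< i` that agreed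
with the row so far, which produces `χ` different codes out of fewer than `χ`.
-/

open Filter Function

universe u

section Cofinality

variable {α β : Type u} {f : α → β}

theorem cof_le_cof_of_forall_isCofinal_image [Preorder α] [Preorder β]
    (hf : ∀ s : Set α, IsCofinal s → IsCofinal (f '' s)) : Order.cof β ≤ Order.cof α := by
  obtain ⟨s, hs, hs_card⟩ := Order.exists_cof_eq α
  calc Order.cof β ≤ #(f '' s) := Order.cof_le (hf s hs)
    _ ≤ #s := mk_image_le
    _ = Order.cof α := hs_card

variable [LinearOrder α] [LinearOrder β] [Nonempty α]

theorem cof_eq_of_tendsto_atTop [NoMaxOrder β] (hf : Tendsto f atTop atTop) :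
    Order.cof α = Order.cof β := by
  choose a ha using tendsto_atTop_atTop.1 hf
  apply le_antisymm
  · refine cof_le_cof_of_forall_isCofinal_image (f := a) fun s hs x ↦ ?_
    obtain ⟨y, hxy⟩ := exists_gt (f x)
    obtain ⟨t, ht, hyt⟩ := hs y
    refine ⟨a t, mem_image_of_mem a ht, le_of_not_gt fun hlt ↦ ?_⟩
    exact (hxy.trans_le hyt).not_ge (ha t x hlt.le)
  · refine cof_le_cof_of_forall_isCofinal_image (f := f) fun s hs y ↦ ?_
    obtain ⟨x, hx, hax⟩ := hs (a y)
    exact ⟨f x, mem_image_of_mem f hx, ha y x hax⟩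

theorem exists_frequently_lt_of_cof_ne [NoMaxOrder β] (h : Order.cof α ≠ Order.cof β)
    (f : α → β) : ∃ b, ∃ᶠ a in atTop, f a < b := by
  by_contra! hf
  exact h (cof_eq_of_tendsto_atTop (tendsto_atTop.2 hf))

end Cofinality

/-- A function into `W` defined on the predecessors of a point of `L`: an element of `W^{<λ}`
when `L` has order type `λ`. -/
abbrev InitialMap (L W : Type*) [Preorder L] : Type _ :=
  Σ a : L, Iio a → W

theorem InitialMap.mk_le {L W : Type u} [Preorder L] [Infinite L] [Nonempty W]
    {κ : Cardinal.{u}} (hL : ∀ a : L, #(Iio a) ≤ κ) (hW : #W ^ κ ≤ #L) : #(InitialMap L W) ≤ #L :=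
  calc #(InitialMap L W) = sum fun a : L ↦ #W ^ #(Iio a) := by simp
    _ ≤ sum fun _ : L ↦ #L :=
      Cardinal.sum_le_sum _ _ fun a ↦ (Cardinal.power_le_power_left (mk_ne_zero W) (hL a)).trans hW
    _ = #L := by simp

section Guess

variable {K L V : Type u}

section Preorder

variable [Preorder K] [Preorder L]

/-- Row `i`, entry `ζ` of the partial array `c` agrees with `y` on the domain of `c`. -/
def InitialMap.Matches (c : InitialMap L (K → K → V)) (i ζ : K) (y : L → V) : Prop :=
  ∀ x : Iio c.1, c.2 x i ζ = y x

variable (code : L → InitialMap L (K → K → V)) (e : ∀ δ : L, Iio δ → K)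

/-- The codes below `δ` of rank `< i` (with respect to `e δ`) that are defined at `b` and whose
row `i` matches the functions `Y η` for all `η < ζ`. -/
def candidates (i ζ : K) (Y : Iio ζ → L → V) (δ b : L) : Set (Iio δ) :=
  {β | e δ β < i ∧ b < (code β).1 ∧ ∀ η, (code β).Matches i η.1 (Y η)}

open Classical in
/-- The guess at `δ`, evaluated at `b`, of the strategy with parameters `i, ζ` that has already
seen the counterexamples `Y η` for `η < ζ`: entry `ζ` of row `i` of some candidate.
The value is arbitrary if there is no candidate. -/
noncomputable def guess [Nonempty V] (i ζ : K) (Y : Iio ζ → L → V) (δ b : L) : V :=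
  if h : (candidates code e i ζ Y δ b).Nonempty then
    (code h.some).2 ⟨b, h.some_mem.2.1⟩ i ζ
  else Classical.arbitrary V

variable {code e} [Nonempty V] {i ζ : K} {δ b : L}

theorem exists_mem_candidates_not_matches {Y : Iio ζ → L → V} {y : L → V}
    (h : (candidates code e i ζ Y δ b).Nonempty) (hb : guess code e i ζ Y δ b ≠ y b) :
    ∃ β ∈ candidates code e i ζ Y δ b, ¬ (code β).Matches i ζ y := by
  refine ⟨h.some, h.some_mem, fun hmatch ↦ hb ?_⟩
  rw [guess, dif_pos h]
  exact hmatch ⟨b, h.some_mem.2.1⟩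

end Preorder

/-- If all guesses of row `i` fail, the candidates refuted at the stages `ζ : K` are pairwise
distinct, but there are only `#(Iio i) < #K` codes of rank `< i`. -/
theorem exists_guess_eq [LinearOrder K] [LinearOrder L] [Nonempty V] [Infinite K] [NoMaxOrder K]
    {code : L → InitialMap L (K → K → V)} {e : ∀ δ : L, Iio δ → K} {δ : L}
    (hK : ∀ i : K, #(Iio i) < #K) (he : Injective (e δ)) {Y : K → K → L → V} {f : L → L}
    (hf : ∀ a, code (f a) = ⟨a, fun x i ζ ↦ Y i ζ x⟩) (hδ : MapsTo f (Iio δ) (Iio δ))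
    [NoMaxOrder (Iio δ)] (hcof : Order.cof (Iio δ) ≠ Order.cof K) :
    ∃ i ζ, ∀ b < δ, guess code e i ζ (fun η ↦ Y i η) δ b = Y i ζ b := by
  by_contra! hne
  obtain ⟨b₀, hb₀, -⟩ := hne (Classical.arbitrary K) (Classical.arbitrary K)
  have : Nonempty (Iio δ) := ⟨b₀, hb₀⟩
  obtain ⟨i, hi⟩ := exists_frequently_lt_of_cof_ne hcof fun a ↦ e δ ⟨f a, hδ a.2⟩
  have hrefuted : ∀ ζ, ∃ β : Iio δ, e δ β < i ∧ (∀ η < ζ, (code β).Matches i η (Y i η)) ∧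
      ¬ (code β).Matches i ζ (Y i ζ) := by
    intro ζ
    obtain ⟨b, hbδ, hb⟩ := hne i ζ
    obtain ⟨a, hba, ha⟩ := frequently_atTop'.1 hi ⟨b, hbδ⟩
    have hcand : (candidates code e i ζ (fun η ↦ Y i η) δ b).Nonempty := by
      refine ⟨⟨f a, hδ a.2⟩, ha, ?_, fun η ↦ ?_⟩
      · rw [hf]
        exact hba
      · rw [hf]
        exact fun _ ↦ rfl
    obtain ⟨β, ⟨hβi, -, hβ⟩, hβζ⟩ := exists_mem_candidates_not_matches hcand hb
    exact ⟨β, hβi, fun η hη ↦ hβ ⟨η, hη⟩, hβζ⟩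
  choose β hβi hβ hβζ using hrefuted
  have hβ_inj : Injective β := Function.Injective.of_lt_imp_ne fun η ζ hηζ heq ↦
    hβζ η (heq ▸ hβ ζ η hηζ)
  have hle : #K ≤ #(Iio i) :=
    mk_le_of_injective (f := fun ζ ↦ (⟨e δ (β ζ), hβi ζ⟩ : Iio i)) fun η ζ h ↦
      hβ_inj (he (congrArg Subtype.val h))
  exact (hK i).not_ge hle

end Guess

section FilterDiamond

variable {K L V : Type u}

theorem exists_surjective_initialMap [Preorder L] [Infinite K] [Infinite L] [Nonempty V]
    (hL : ∀ a : L, #(Iio a) ≤ #K) (hV : #V ^ #K ≤ #L) :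
    ∃ code : L → InitialMap L (K → K → V), Surjective code := by
  have hpow : #(K → K → V) ^ #K ≤ #L := by
    simpa [← power_mul] using hV
  have : Nonempty (InitialMap L (K → K → V)) :=
    ⟨⟨Classical.arbitrary L, fun _ ↦ Classical.arbitrary _⟩⟩
  obtain ⟨emb⟩ := InitialMap.mk_le hL hpow
  exact ⟨invFun emb, invFun_surjective emb.injective⟩

/-- `L` plays the role of `λ = χ⁺` and `K` that of `χ`. -/
theorem exists_forall_frequently_eq [LinearOrder K] [WellFoundedLT K] [Infinite K]
    [LinearOrder L] [NoMaxOrder L] [Nonempty V]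
    (hK : ord #K = typeLT K) (hL : ∀ a : L, #(Iio a) ≤ #K) (hV : #V ^ #K ≤ #L)
    (l : Filter L) [CardinalInterFilter l (Order.succ #K)]
    (hclosed : ∀ f : L → L, ∀ᶠ δ in l, MapsTo f (Iio δ) (Iio δ))
    (hcof : ∃ᶠ δ in l, Order.cof (Iio δ) ≠ Order.cof K) :
    ∃ F : L → L → V, ∀ g : L → V, ∃ᶠ δ in l, ∀ b < δ, g b = F δ b := by
  by_contra! hno
  choose G hG using hno
  have : Nonempty L := hcof.exists.nonempty
  have : NoMaxOrder K :=
    isSuccPrelimit_type_lt_iff.1 (hK ▸ (isSuccLimit_ord (aleph0_le_mk K)).isSuccPrelimit)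
  obtain ⟨code, hcode⟩ := exists_surjective_initialMap (V := V) hL hV
  choose e he using fun a ↦ (⟨(hL a).some, (hL a).some.injective⟩ : ∃ e : Iio a → K, Injective e)
  have hY : ∀ i : K, ∃ y : K → L → V, ∀ ζ, y ζ = G (guess code e i ζ fun η ↦ y η) := fun i ↦
    ⟨wellFounded_lt.fix fun ζ y ↦ G (guess code e i ζ fun η ↦ y η η.2),
      fun ζ ↦ wellFounded_lt.fix_eq _ ζ⟩
  choose Y hY using hY
  have hfail : ∀ᶠ δ in l, ∀ p : K × K, ∃ b < δ,
      Y p.1 p.2 b ≠ guess code e p.1 p.2 (fun η ↦ Y p.1 η) δ b := by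
    have hcard : #(K × K) < Order.succ #K := by simp
    exact (eventually_cardinal_forall hcard).2 fun p ↦ hY p.1 p.2 ▸ hG _
  choose f hf using fun a ↦ hcode ⟨a, fun x i ζ ↦ Y i ζ x⟩
  choose s hs using exists_gt (α := L)
  obtain ⟨δ, hδcof, hδfail, hδf, hδs⟩ :=
    (hcof.and_eventually (hfail.and ((hclosed f).and (hclosed s)))).exists
  have : NoMaxOrder (Iio δ) := ⟨fun a ↦ ⟨⟨s a, hδs a.2⟩, hs a⟩⟩
  obtain ⟨i, ζ, hguess⟩ := exists_guess_eq (fun i ↦ mk_Iio_lt i hK) (he δ) hf hδf hδcof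
  obtain ⟨b, hbδ, hb⟩ := hδfail (i, ζ)
  exact hb (hguess b hbδ).symm

end FilterDiamond

section Ordinals

theorem cof_Iio_subtype_eq_cof_Iio_iff {o b : Ordinal.{u}} {a : Iio o} :
    Order.cof (Iio a) = Order.cof (Iio b) ↔ (a : Ordinal.{u}).cof = b.cof := by
  have ha : Order.cof (Iio a) = Order.cof (Iio (a : Ordinal.{u})) :=
    ((principalSegIio a).trans (principalSegIio o)).orderIsoIio.cof_congr
  rw [ha, Ordinal.cof_Iio, Ordinal.cof_Iio, ← Ordinal.lift_cof, ← Ordinal.lift_cof,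
    Cardinal.lift_inj]

variable (c : Cardinal.{u})

theorem mk_Iio_ord : #(Iio c.ord) = Cardinal.lift.{u + 1} c := by
  rw [Cardinal.mk_Iio_ordinal, card_ord]

theorem ord_mk_Iio_ord : ord #(Iio c.ord) = typeLT (Iio c.ord) := by
  rw [mk_Iio_ord, type_lt_Iio, lift_ord]

theorem mk_Iio_ord_succ : #(Iio (Order.succ c).ord) = Order.succ #(Iio c.ord) := by
  rw [mk_Iio_ord, mk_Iio_ord, Cardinal.lift_succ]

theorem mk_Iio_le_of_Iio_ord_succ (a : Iio (Order.succ c).ord) : #(Iio a) ≤ #(Iio c.ord) :=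
  Order.lt_succ_iff.1 ((mk_Iio_lt a (ord_mk_Iio_ord _)).trans_eq (mk_Iio_ord_succ c))

variable {c}

theorem infinite_Iio_ord (hc : ℵ₀ ≤ c) : Infinite (Iio c.ord) := by
  rwa [infinite_iff, mk_Iio_ord, aleph0_le_lift]

theorem mk_Iio_ord_succ_power (hc : ℵ₀ ≤ c) (h2 : (2 : Cardinal.{u}) ^ c = Order.succ c) :
    #(Iio (Order.succ c).ord) ^ #(Iio c.ord) = #(Iio (Order.succ c).ord) := by
  rw [mk_Iio_ord, mk_Iio_ord, ← Cardinal.lift_power, ← h2, ← power_mul, mul_eq_self hc]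

end Ordinals

section Club

theorem exists_le_lt_ord_mapsTo_Iio {c : Cardinal.{u}} {f : Ordinal.{u} → Ordinal.{u}}
    (hc : c.IsRegular) (hc' : ℵ₀ < c)
    (hf : MapsTo f (Iio c.ord) (Iio c.ord)) {a : Ordinal.{u}} (ha : a < c.ord) :
    ∃ δ, a ≤ δ ∧ δ < c.ord ∧ MapsTo f (Iio δ) (Iio δ) := by
  let g (x : Ordinal) : Ordinal := ⨆ y : Iio x, (f y + 1)
  have hg (x) (hx : x < c.ord) : g x < c.ord := by
    refine Ordinal.lift_iSup_add_one_lt_of_lt_cof ?_ fun y : Iio x ↦ hf (y.2.trans hx)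
    rwa [← Ordinal.lift_cof, hc.cof_ord, Cardinal.mk_Iio_ordinal, Cardinal.lift_lift,
      Cardinal.lift_lt, ← lt_ord]
  refine ⟨nfp g a, le_nfp g a, nfp_lt_ord_of_isRegular hc hc'.ne' hg ha, fun x hx ↦ ?_⟩
  obtain ⟨n, hn⟩ := lt_nfp_iff.1 hx
  refine lt_nfp_iff.2 ⟨n + 1, ?_⟩
  rw [Function.iterate_succ_apply']
  exact (lt_add_one (f x)).trans_le (Ordinal.le_iSup (fun y : Iio (g^[n] a) ↦ f y + 1) ⟨x, hn⟩)

theorem isClubIn_setOf_mapsTo_Iio {c : Cardinal.{0}} {f : Ordinal.{0} → Ordinal.{0}}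
    (hc : c.IsRegular) (hc' : ℵ₀ < c)
    (hf : MapsTo f (Iio c.ord) (Iio c.ord)) :
    IsClubIn c.ord {δ | δ < c.ord ∧ MapsTo f (Iio δ) (Iio δ)} := by
  refine ⟨fun δ hδ ↦ hδ.1, fun a ha ↦ ?_, fun a ha hne hsup ↦ ⟨ha, fun x hx ↦ ?_⟩⟩
  · obtain ⟨δ, haδ, hδ⟩ := exists_le_lt_ord_mapsTo_Iio hc hc' hf ha
    exact ⟨δ, hδ, haδ⟩
  · obtain ⟨δ, ⟨⟨-, hδ⟩, hδa⟩, hxδ⟩ := exists_lt_of_lt_csSup hne (hx.trans_eq hsup.symm)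
    exact lt_trans (b := δ) (hδ hxδ) hδa

end Club

namespace IsFilterOn

variable {o : Ordinal.{0}} {D : Set (Set Ordinal.{0})} {S A : Set Ordinal.{0}}

/-- The filter on the subtype `Iio o` corresponding to a filter on `o` in the sense of
`IsFilterOn`, giving access to the filter library. -/
def toFilter (hD : IsFilterOn o D) : Filter (Iio o) where
  sets := {s | Subtype.val '' s ∈ D}
  univ_sets := by
    rw [Set.mem_ofPred_eq, image_univ, Subtype.range_coe]
    exact hD.2.1
  sets_of_superset {_ t} hs hst :=
    hD.2.2.2.1 _ hs _ (Subtype.coe_image_subset _ t) (image_mono hst)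
  inter_sets {s t} hs ht := by
    simpa [image_inter Subtype.val_injective] using hD.2.2.2.2 _ hs _ ht

variable (hD : IsFilterOn o D)

theorem mem_toFilter {s : Set (Iio o)} : s ∈ hD.toFilter ↔ Subtype.val '' s ∈ D :=
  Iff.rfl

theorem dPos_iff : DPos o D S ↔ S ⊆ Iio o ∧ ∃ᶠ x in hD.toFilter, ↑x ∈ S := by
  have : Subtype.val '' {x : Iio o | ↑x ∉ S} = Iio o \ S := by
    ext; simp [and_comm]
  rw [DPos, Filter.Frequently, Filter.Eventually, hD.mem_toFilter, this]

theorem dPos_dPlus_iff :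
    DPos o (DPlus o D S) A ↔
      A ⊆ Iio o ∧ ∃ᶠ x in hD.toFilter ⊓ 𝓟 (Subtype.val ⁻¹' S), ↑x ∈ A := by
  have : Subtype.val '' {x : Iio o | ¬ (↑x ∈ S ∧ ↑x ∈ A)} = (Iio o \ A) ∪ (Iio o \ S) := by
    ext
    simp only [not_and, mem_image, Set.mem_ofPred_eq, Subtype.exists, mem_Iio, exists_and_left,
      exists_prop, exists_eq_right_right, mem_union, Set.mem_sdiff]
    tauto
  rw [DPos, DPlus, frequently_inf_principal, Filter.Frequently, Filter.Eventually]
  simp only [Set.mem_ofPred_eq, Set.sdiff_subset, true_and, mem_preimage, hD.mem_toFilter, this]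

theorem cardinalInterFilter_toFilter {μ : Cardinal.{0}} (hcomp : CompleteFor μ o D) :
    CardinalInterFilter hD.toFilter (Cardinal.lift.{1} μ) := by
  refine ⟨fun T hT hTD ↦ ?_⟩
  obtain ⟨κ, hκμ, hκT⟩ := Cardinal.lt_lift_iff.1 hT
  have hcard : #(Iio κ.ord) = #T := by rw [mk_Iio_ord, hκT]
  obtain ⟨t⟩ := Cardinal.eq.1 hcard
  let s (i : Ordinal) : Set Ordinal := if h : i ∈ Iio κ.ord then Subtype.val '' (t ⟨i, h⟩).1 else ∅
  have hs (i : Iio κ.ord) : s i = Subtype.val '' (t i).1 := dif_pos i.2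
  have hinter := hcomp κ.ord (by rwa [card_ord]) s fun i hi ↦ by
    rw [hs ⟨i, hi⟩]
    exact hTD _ (t _).2
  refine hD.2.2.2.1 _ hinter _ (Subtype.coe_image_subset _ _) ?_
  refine fun x ⟨hxo, hx⟩ ↦ ⟨⟨x, hxo⟩, fun r hr ↦ ?_, rfl⟩
  have hxr := mem_iInter₂.1 hx (t.symm ⟨r, hr⟩) (t.symm ⟨r, hr⟩).2
  rw [hs, Equiv.apply_symm_apply] at hxr
  exact (Subtype.val_injective.mem_set_image (a := ⟨x, hxo⟩)).1 hxr

theorem eventually_mapsTo_Iio {c : Cardinal.{0}} (hc : c.IsRegular) (hc' : ℵ₀ < c)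
    (hD : IsFilterOn c.ord D) (hclub : ExtendsClubs c.ord D) (f : Iio c.ord → Iio c.ord) :
    ∀ᶠ δ in hD.toFilter, MapsTo f (Iio δ) (Iio δ) := by
  let f' (x : Ordinal) : Ordinal := if h : x < c.ord then f ⟨x, h⟩ else 0
  have hf' (x : Iio c.ord) : f' x = f x := dif_pos x.2
  have hclub_f' := hclub _ <| isClubIn_setOf_mapsTo_Iio hc hc' (f := f') fun x hx ↦
    (hf' ⟨x, hx⟩).trans_lt (f ⟨x, hx⟩).2
  refine hD.2.2.2.1 _ hclub_f' _ (Subtype.coe_image_subset _ _) ?_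
  rintro δ ⟨hδc, hδ⟩
  exact ⟨⟨δ, hδc⟩, fun x hx ↦ (hf' x).symm.trans_lt (hδ hx), rfl⟩

theorem diamondFilter_dPlus {F : Iio o → Iio o → Iio o}
    (hF : ∀ g : Iio o → Iio o,
      ∃ᶠ δ in hD.toFilter ⊓ 𝓟 (Subtype.val ⁻¹' S), ∀ b < δ, g b = F δ b) :
    DiamondFilter o (DPlus o D S) := by
  let f (α β : Ordinal) : Ordinal := if h : α ∈ Iio o ∧ β ∈ Iio o then F ⟨α, h.1⟩ ⟨β, h.2⟩ else 0
  have hf (δ b : Iio o) : f δ b = F δ b := dif_pos ⟨δ.2, b.2⟩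
  refine ⟨Iio o, hD.dPos_dPlus_iff.2 ⟨subset_rfl, (hF id).mono fun δ _ ↦ δ.2⟩, f,
    fun α hα β hβ ↦ ?_, fun g hg ↦ hD.dPos_dPlus_iff.2 ⟨fun α hα ↦ hα.1, ?_⟩⟩
  · exact (hf ⟨α, hα⟩ ⟨β, hβ.trans hα⟩).trans_lt (F _ _).2
  · refine (hF fun a ↦ ⟨g a, hg a a.2⟩).mono fun δ hδ ↦ ⟨δ.2, fun β hβ ↦ ?_⟩
    let b : Iio o := ⟨β, hβ.trans δ.2⟩
    exact (congrArg Subtype.val (hδ b hβ)).trans (hf δ b).symm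

end IsFilterOn

theorem stmt5 (χ : Cardinal.{0}) (hχ : ℵ₀ ≤ χ) (h2 : (2 : Cardinal.{0}) ^ χ = Order.succ χ)
    (D : Set (Set Ordinal.{0})) (hD : IsFilterOn (Order.succ χ).ord D)
    (hDclub : ExtendsClubs (Order.succ χ).ord D)
    (hcomp : CompleteFor (Order.succ χ) (Order.succ χ).ord D)
    (S : Set Ordinal) (hS : DPos (Order.succ χ).ord D S)
    (hcf : ∀ δ ∈ S, δ.cof ≠ χ.ord.cof) :
    DiamondFilter (Order.succ χ).ord (DPlus (Order.succ χ).ord D S) := by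
  have hχ' : ℵ₀ < Order.succ χ := hχ.trans_lt (Order.lt_succ χ)
  have : Infinite (Iio χ.ord) := infinite_Iio_ord hχ
  have : Infinite (Iio (Order.succ χ).ord) := infinite_Iio_ord hχ'.le
  have : NoMaxOrder (Iio (Order.succ χ).ord) :=
    (isSuccLimit_ord hχ'.le).isSuccPrelimit.noMaxOrder_Iio
  have : CardinalInterFilter hD.toFilter (Order.succ #(Iio χ.ord)) := by
    rw [← mk_Iio_ord_succ, mk_Iio_ord]
    exact hD.cardinalInterFilter_toFilter hcomp
  have hclosed := hD.eventually_mapsTo_Iio (isRegular_succ hχ) hχ' hDclub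
  have hcof : ∃ᶠ δ in hD.toFilter ⊓ 𝓟 (Subtype.val ⁻¹' S),
      Order.cof (Iio δ) ≠ Order.cof (Iio χ.ord) :=
    frequently_inf_principal.2 <| (hD.dPos_iff.1 hS).2.mono fun δ hδ ↦
      ⟨hδ, cof_Iio_subtype_eq_cof_Iio_iff.not.2 (hcf δ hδ)⟩
  obtain ⟨F, hF⟩ := exists_forall_frequently_eq (V := Iio (Order.succ χ).ord) (ord_mk_Iio_ord χ)
    (mk_Iio_le_of_Iio_ord_succ χ) (mk_Iio_ord_succ_power hχ h2).le _
    (fun f ↦ (hclosed f).filter_mono inf_le_left) hcof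
  exact hD.diamondFilter_dPlus hF
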